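/- Let R be an integral domain and P a prime ideal of R[X] with p = P ∩ R. If for every t ≥ 1 the ideal p^t is p-primary (i.e. p^t is primary with radical equal to p), then P is power stable. -/

import Mathlib

open Polynomial

/-- An ideal `I` of `R[X]` is power stable if for all `t ≥ 1`,
`I^t ∩ R = (I ∩ R)^t`, intersections with `R` meaning contraction along `C : R →+* R[X]`. -/
def IsPowerStable {R : Type*} [CommRing R] (I : Ideal R[X]) : Prop :=
  ∀ t : ℕ, 1 ≤ t →
    (I ^ t).comap (C : R →+* R[X]) = (I.comap (C : R →+* R[X])) ^ t

/-!
Suppose first that `m = I ∩ R` is maximal. Over the field `R/m` the image of `I` is principal, so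
either `I = m R[X]` or `I = m R[X] + (f)` with `f` monic of positive degree. In the second case
`I ^ t ⊆ m ^ t R[X] + (f)`, and modulo `m ^ t` the monic polynomial `f` divides no nonzero constant,
so `I ^ t ∩ R = m ^ t`. In general, contraction to the coefficients commutes with localization, so
localizing at `p = I ∩ R` shows that `I ^ t ∩ R` and `p ^ t` generate the same ideal of `R_p`; as
`p ^ t` is `p`-primary, it is the contraction of that ideal to `R`.
-/

lemma sup_pow_le_pow_sup {A : Type*} [CommSemiring A] (I J : Ideal A) (n : ℕ) :
    (I ⊔ J) ^ n ≤ I ^ n ⊔ J := by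
  induction n with
  | zero => simp
  | succ n ih =>
    calc (I ⊔ J) ^ (n + 1)
      _ = (I ⊔ J) ^ n * (I ⊔ J) := pow_succ _ n
      _ ≤ (I ^ n ⊔ J) * (I ⊔ J) := Ideal.mul_mono_left ih
      _ = I ^ (n + 1) ⊔ I ^ n * J ⊔ J * (I ⊔ J) := by
        rw [Ideal.sup_mul, Ideal.mul_sup, ← pow_succ]
      _ ≤ I ^ (n + 1) ⊔ J :=
        sup_le (sup_le_sup_left Ideal.mul_le_right _) (le_sup_of_le_right Ideal.mul_le_left)

section CommRing

variable {R : Type*} [CommRing R]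

lemma comap_C_map_C (a : Ideal R) : (a.map C).comap (C : R →+* R[X]) = a := by
  refine le_antisymm (fun x hx => ?_) Ideal.le_comap_map
  simpa only [coeff_C_zero] using Ideal.mem_map_C_iff.mp hx 0

lemma map_C_sup_span_singleton_eq_comap (a : Ideal R) (f : R[X]) :
    a.map C ⊔ Ideal.span {f} =
      (Ideal.span {f.map (Ideal.Quotient.mk a)}).comap (mapRingHom (Ideal.Quotient.mk a)) := by
  rw [← coe_mapRingHom, ← Set.image_singleton, ← Ideal.map_span,
    Ideal.comap_map_of_surjective' _ (map_surjective _ Ideal.Quotient.mk_surjective),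
    ker_mapRingHom, Ideal.mk_ker, sup_comm]

lemma comap_C_map_C_sup_span_singleton (a : Ideal R) {f : R[X]} (hf : f.Monic)
    (hdeg : f.natDegree ≠ 0) :
    (a.map C ⊔ Ideal.span {f}).comap (C : R →+* R[X]) = a := by
  refine le_antisymm (fun x hx => ?_) (Ideal.map_le_iff_le_comap.mp le_sup_left)
  have hdvd : f.map (Ideal.Quotient.mk a) ∣ C (Ideal.Quotient.mk a x) := by
    rw [map_C_sup_span_singleton_eq_comap] at hx
    simpa only [Ideal.mem_comap, Ideal.mem_span_singleton, coe_mapRingHom, map_C] using hx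
  by_contra hxa
  have hx0 : Ideal.Quotient.mk a x ≠ 0 := mt Ideal.Quotient.eq_zero_iff_mem.mp hxa
  have := nontrivial_of_ne _ _ hx0
  refine (hf.map _).not_dvd_of_natDegree_lt (C_ne_zero.mpr hx0) ?_ hdvd
  rw [natDegree_C, hf.natDegree_map]
  exact Nat.pos_of_ne_zero hdeg

lemma isPowerStable_map_C (a : Ideal R) : IsPowerStable (a.map C) := fun t _ => by
  rw [← Ideal.map_pow, comap_C_map_C, comap_C_map_C]

lemma isPowerStable_map_C_sup_span_singleton (a : Ideal R) {f : R[X]} (hf : f.Monic)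
    (hdeg : f.natDegree ≠ 0) : IsPowerStable (a.map C ⊔ Ideal.span {f}) := fun t _ => by
  refine le_antisymm ?_ (Ideal.le_comap_pow _ t)
  calc ((a.map C ⊔ Ideal.span {f}) ^ t).comap C
    _ ≤ ((a.map C) ^ t ⊔ Ideal.span {f}).comap C := Ideal.comap_mono (sup_pow_le_pow_sup _ _ t)
    _ = ((a ^ t).map C ⊔ Ideal.span {f}).comap C := by rw [Ideal.map_pow]
    _ = a ^ t := comap_C_map_C_sup_span_singleton _ hf hdeg
    _ = ((a.map C ⊔ Ideal.span {f}).comap C) ^ t := by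
      rw [comap_C_map_C_sup_span_singleton _ hf hdeg]

lemma isPowerStable_of_isMaximal_comap_C (I : Ideal R[X])
    (hI : (I.comap (C : R →+* R[X])).IsMaximal) : IsPowerStable I := by
  by_cases hext : I = (I.comap C).map C
  · rw [hext]
    exact isPowerStable_map_C _
  · obtain ⟨f, hf, hIf⟩ := exists_monic_span_sup_map_eq R I hI hext
    have hdeg : f.natDegree ≠ 0 := fun hdeg => hI.ne_top <| by
      rw [hIf, hf.natDegree_eq_zero.mp hdeg, Ideal.span_singleton_one, sup_top_eq, Ideal.comap_top]
    rw [hIf]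
    exact isPowerStable_map_C_sup_span_singleton _ hf hdeg

attribute [local instance] Polynomial.algebra Polynomial.isLocalization in
lemma comap_C_map_mapRingHom_algebraMap (M : Submonoid R) (S : Type*) [CommRing S] [Algebra R S]
    [IsLocalization M S] (I : Ideal R[X]) :
    (I.map (mapRingHom (algebraMap R S))).comap C = (I.comap C).map (algebraMap R S) := by
  apply le_antisymm
  · rw [← IsLocalization.map_under M S ((I.map _).comap C), Ideal.map_le_iff_le_comap]
    intro x hx
    have hCx : algebraMap R[X] S[X] (C x) ∈ I.map (algebraMap R[X] S[X]) := by
      simpa using hx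
    obtain ⟨_, ⟨m, hm, rfl⟩, hmx⟩ :=
      (IsLocalization.algebraMap_mem_map_algebraMap_iff (M.map C) S[X] I (C x)).mp hCx
    refine (IsLocalization.algebraMap_mem_map_algebraMap_iff M S _ x).mpr ⟨m, hm, ?_⟩
    simpa using hmx
  · rw [Ideal.map_le_iff_le_comap, Ideal.comap_comap, ← mapRingHom_comp_C, ← Ideal.comap_comap]
    exact Ideal.comap_mono Ideal.le_comap_map

lemma IsPowerStable.map_comap_C_pow_eq (M : Submonoid R) (S : Type*) [CommRing S] [Algebra R S]
    [IsLocalization M S] {I : Ideal R[X]}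
    (hI : IsPowerStable (I.map (mapRingHom (algebraMap R S)))) {t : ℕ} (ht : 1 ≤ t) :
    ((I ^ t).comap C).map (algebraMap R S) = ((I.comap C) ^ t).map (algebraMap R S) := by
  rw [← comap_C_map_mapRingHom_algebraMap M, Ideal.map_pow, hI t ht,
    comap_C_map_mapRingHom_algebraMap M, Ideal.map_pow]

lemma isPowerStable_map_localizationAtPrime (I : Ideal R[X])
    [(I.comap (C : R →+* R[X])).IsPrime] :
    IsPowerStable
      (I.map (mapRingHom (algebraMap R (Localization.AtPrime (I.comap (C : R →+* R[X])))))) := by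
  apply isPowerStable_of_isMaximal_comap_C
  rw [comap_C_map_mapRingHom_algebraMap (I.comap C).primeCompl,
    Localization.AtPrime.map_eq_maximalIdeal]
  infer_instance

theorem stmt_9_general (I : Ideal R[X]) (hI : (I.comap (C : R →+* R[X])).IsPrime)
    (hprim : ∀ t : ℕ, 1 ≤ t → ((I.comap (C : R →+* R[X])) ^ t).IsPrimary) :
    IsPowerStable I := fun t ht => by
  set p := I.comap (C : R →+* R[X])
  let S := Localization.AtPrime p
  have hdisj : Disjoint (p.primeCompl : Set R) ↑(p ^ t) :=
    disjoint_compl_left.mono_right (Ideal.pow_le_self (Nat.one_le_iff_ne_zero.mp ht))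
  refine le_antisymm ?_ (Ideal.le_comap_pow _ t)
  calc (I ^ t).comap C
    _ ≤ (((I ^ t).comap C).map (algebraMap R S)).comap (algebraMap R S) := Ideal.le_comap_map
    _ = ((p ^ t).map (algebraMap R S)).comap (algebraMap R S) := by
      rw [(isPowerStable_map_localizationAtPrime I).map_comap_C_pow_eq p.primeCompl S ht]
    _ = p ^ t := IsLocalization.under_map_of_isPrimary_disjoint _ S (hprim t ht) hdisj

end CommRing

theorem stmt_9 {R : Type*} [CommRing R] [IsDomain R] (P : Ideal R[X])
    (hP : P.IsPrime) (p : Ideal R) (hp : p = P.comap (C : R →+* R[X]))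
    (hprim : ∀ t : ℕ, 1 ≤ t → (p ^ t).IsPrimary ∧ (p ^ t).radical = p) :
    IsPowerStable P := by
  subst hp
  exact stmt_9_general P inferInstance fun t ht => (hprim t ht).1
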